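/- arXiv:2501.18600 — 2 statements merged into one kernel-verified Lean document; each statement's English description precedes it below -/
import Mathlib

section
/- Let L = 2m+1 ≥ 3 be an odd integer and let N ≥ 2 be an integer admitting a divisor d ≥ 2 with gcd(d, L) = 1. Then the L-state M-type Grover walk on the cycle with N vertices has infinite period; that is, (U^{M,L}_N)^n ≠ I for every integer n ≥ 1. -/
open Matrix Polynomial

/-- The M-type Grover coin `A^{M,L}` for `L = 2m+1`: diagonal entries `-(2m-1)/L`,
off-diagonal entries `2/L`. -/
noncomputable def coinM (m : ℕ) : Matrix (Fin (2*m+1)) (Fin (2*m+1)) ℂ :=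
  fun i j => if i = j then (1 - 2*(m:ℂ)) / (2*(m:ℂ)+1) else 2 / (2*(m:ℂ)+1)

/-- The F-type Grover coin `A^{F,L}` for `L = 2m+1`: anti-diagonal entries `-(2m-1)/L`,
all other entries `2/L`. -/
noncomputable def coinF (m : ℕ) : Matrix (Fin (2*m+1)) (Fin (2*m+1)) ℂ :=
  fun i j => if (i : ℕ) + (j : ℕ) = 2*m then (1 - 2*(m:ℂ)) / (2*(m:ℂ)+1)
    else 2 / (2*(m:ℂ)+1)

/-- The time-evolution operator of the `L`-state (`L = 2m+1`) Grover walk with local coin `A`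
on the cycle `C_N`: entry at `((v,i),(w,j))` is `A i j` if `v ≡ w + (i - m) (mod N)`,
and `0` otherwise. -/
noncomputable def walkU (m N : ℕ) (A : Matrix (Fin (2*m+1)) (Fin (2*m+1)) ℂ) :
    Matrix ((ZMod N) × Fin (2*m+1)) ((ZMod N) × Fin (2*m+1)) ℂ :=
  fun p q => if p.1 = q.1 + ((p.2 : ℕ) : ZMod N) - (m : ZMod N) then A p.2 q.2 else 0

/-- `ζ_N = exp(2πi/N)`. -/
noncomputable def zetaN (N : ℕ) : ℂ := Complex.exp (2 * Real.pi * Complex.I / N)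

/-- The diagonal matrix `Z = diag(ζ_N^m, ζ_N^{m-1}, …, ζ_N^{-m})`. -/
noncomputable def Zmat (N m : ℕ) : Matrix (Fin (2*m+1)) (Fin (2*m+1)) ℂ :=
  Matrix.diagonal fun i => zetaN N ^ ((m : ℤ) - ((i : ℕ) : ℤ))

/-- The integer power `Z^k` of the diagonal matrix `Z`, defined for any `k ∈ ℤ`. -/
noncomputable def ZmatPow (N m : ℕ) (k : ℤ) : Matrix (Fin (2*m+1)) (Fin (2*m+1)) ℂ :=
  Matrix.diagonal fun i => zetaN N ^ ((((m : ℤ) - ((i : ℕ) : ℤ))) * k)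

/-- `f^{M,L}_{N,k}(x) = det(x·I_L − Z^k A^{M,L})`. -/
noncomputable def fMk (m N : ℕ) (k : ℤ) : Polynomial ℂ :=
  (ZmatPow N m k * coinM m).charpoly

/-- `f^{M,L}_N(x) = ∏_{k=0}^{N-1} f^{M,L}_{N,k}(x)`. -/
noncomputable def fM (m N : ℕ) : Polynomial ℂ :=
  ∏ k ∈ Finset.range N, fMk m N (k : ℤ)

/-- `f^{F,L}_{N,k}(x) = det(x·I_L − Z^k A^{F,L})`. -/
noncomputable def fFk (m N : ℕ) (k : ℤ) : Polynomial ℂ :=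
  (ZmatPow N m k * coinF m).charpoly

/-- `f^{F,L}_N(x) = ∏_{k=0}^{N-1} f^{F,L}_{N,k}(x)`. -/
noncomputable def fF (m N : ℕ) : Polynomial ℂ :=
  ∏ k ∈ Finset.range N, fFk m N (k : ℤ)

/-- The trace of a complex matrix of finite multiplicative order is an algebraic integer. -/
lemma trace_integral_aux {ι : Type*} [Fintype ι] [DecidableEq ι] (B : Matrix ι ι ℂ) (n : ℕ)
    (hn : 1 ≤ n) (h : B ^ n = 1) : IsIntegral ℤ B.trace := by
  rw [Matrix.trace_eq_sum_roots_charpoly]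
  have key : ∀ x ∈ B.charpoly.roots, IsIntegral ℤ x := by
    intro x hx
    have hr : B.charpoly.IsRoot x := Polynomial.isRoot_of_mem_roots hx
    have hs : x ∈ spectrum ℂ B := Matrix.mem_spectrum_iff_isRoot_charpoly.mpr hr
    have h2 := spectrum.pow_mem_pow B n hs
    rw [h] at h2
    have h3 : x ^ n = 1 := by
      by_contra hne
      apply h2
      have : (algebraMap ℂ (Matrix ι ι ℂ)) (x ^ n) - 1 =
          (algebraMap ℂ (Matrix ι ι ℂ)) (x ^ n - 1) := by simp
      change IsUnit ((algebraMap ℂ (Matrix ι ι ℂ)) (x ^ n) - 1)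
      rw [this]
      exact (IsUnit.mk0 _ (sub_ne_zero.mpr hne)).map _
    refine IsIntegral.of_pow (n := n) hn ?_
    rw [h3]; exact isIntegral_one
  exact (integralClosure ℤ ℂ).multiset_sum_mem key

/-- If the walk has finite order, so does each Fourier block. -/
lemma block_pow_aux (m N : ℕ) [NeZero N] (A : Matrix (Fin (2*m+1)) (Fin (2*m+1)) ℂ)
    (χ : AddChar (ZMod N) ℂ) (n : ℕ) (h : (walkU m N A) ^ n = 1) :
    (Matrix.of fun i j : Fin (2*m+1) =>
      χ ((m : ZMod N) - ((i : ℕ) : ZMod N)) * A i j) ^ n = 1 := by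
  set B := (Matrix.of fun i j : Fin (2*m+1) =>
      χ ((m : ZMod N) - ((i : ℕ) : ZMod N)) * A i j) with hB
  let P : Matrix (ZMod N × Fin (2*m+1)) (Fin (2*m+1)) ℂ :=
    Matrix.of fun p j => if p.2 = j then χ p.1 else 0
  have hUP : walkU m N A * P = P * B := by
    ext ⟨v, i⟩ j
    simp only [Matrix.mul_apply, Fintype.sum_prod_type, P, walkU, hB, Matrix.of_apply]
    have h1 : ∀ w : ZMod N, (v = w + ((i : ℕ) : ZMod N) - (m : ZMod N)) ↔
        w = v + ((m : ZMod N) - ((i : ℕ) : ZMod N)) := by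
      intro w
      constructor
      · intro h; rw [h]; ring
      · intro h; rw [h]; ring
    simp only [h1]
    simp [AddChar.map_add_eq_mul]
    ring
  have hpow : ∀ k : ℕ, (walkU m N A) ^ k * P = P * B ^ k := by
    intro k
    induction k with
    | zero => simp
    | succ k ih =>
      rw [pow_succ, Matrix.mul_assoc, hUP, ← Matrix.mul_assoc, ih, Matrix.mul_assoc, ← pow_succ]
  have h1 := hpow n
  rw [h, Matrix.one_mul] at h1
  ext i j
  have h2 := congrFun (congrFun h1 (0, i)) j
  simp [Matrix.mul_apply, P] at h2
  rw [← h2, Matrix.one_apply]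

/-- For odd `L = 2m+1 ≥ 3` and `N ≥ 2` admitting a divisor `d ≥ 2` coprime to
`L`, the M-type Grover walk on the cycle with `N` vertices has infinite period. -/
theorem stmt2 (m N d : ℕ) [NeZero N] (hm : 1 ≤ m) (hN : 2 ≤ N)
    (hd : d ∣ N) (hd2 : 2 ≤ d) (hcop : Nat.gcd d (2*m+1) = 1) :
    ∀ n : ℕ, 1 ≤ n → (walkU m N (coinM m)) ^ n ≠ 1 := by
  intro n hn hU
  have hζ := Complex.isPrimitiveRoot_exp d (by omega)
  set ζ := Complex.exp (2 * Real.pi * Complex.I / d) with hζdef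
  have hζN : ζ ^ N = 1 := by
    obtain ⟨c, rfl⟩ := hd
    rw [pow_mul, hζ.pow_eq_one, one_pow]
  let χ : AddChar (ZMod N) ℂ := AddChar.zmodChar N hζN
  have hχ1 : χ 1 = ζ := by
    have := AddChar.zmodChar_apply' hζN 1
    simpa using this
  set η := χ (-1) with hη
  have hηζ : η * ζ = 1 := by
    rw [← hχ1, hη, ← AddChar.map_add_eq_mul]; simp
  have hηinv : η = ζ⁻¹ := eq_inv_of_mul_eq_one_left hηζ
  have hprim : IsPrimitiveRoot η d := by rw [hηinv]; exact hζ.inv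
  have hη1 : η ≠ 1 := hprim.ne_one (by omega)
  have hint : ∀ a : ZMod N, IsIntegral ℤ (χ a) := by
    intro a
    refine IsIntegral.of_pow (n := N) (by omega) ?_
    rw [← AddChar.map_nsmul_eq_pow]
    simp [isIntegral_one]
  have hB := block_pow_aux m N (coinM m) χ n hU
  have htr := trace_integral_aux _ n hn hB
  have hS : (Matrix.of fun i j : Fin (2*m+1) =>
      χ ((m : ZMod N) - ((i : ℕ) : ZMod N)) * coinM m i j).trace =
      χ m * ((1 - 2*(m:ℂ)) / (2*(m:ℂ)+1)) * ∑ i ∈ Finset.range (2*m+1), η ^ i := by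
    rw [Matrix.trace, Finset.mul_sum, ← Fin.sum_univ_eq_sum_range
      (fun i => χ m * ((1 - 2*(m:ℂ)) / (2*(m:ℂ)+1)) * η ^ i)]
    refine Finset.sum_congr rfl fun i _ => ?_
    have : (m : ZMod N) - ((i : ℕ) : ZMod N) = m + (i : ℕ) • (-1 : ZMod N) := by
      simp [sub_eq_add_neg]
    simp only [Matrix.diag_apply, Matrix.of_apply, coinM, if_true, this,
      AddChar.map_add_eq_mul, AddChar.map_nsmul_eq_pow, ← hη]
    ring
  rw [hS] at htr
  obtain ⟨s, hs⟩ := Nat.exists_mul_mod_eq_one_of_coprime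
    (show Nat.Coprime (2*m+1) d from (Nat.gcd_comm _ _).trans hcop) (by omega)
  have hs2 : η ^ ((2*m+1) * s) = η := by
    rw [← pow_mod_orderOf, ← hprim.eq_orderOf, hs.2, pow_one]
  set S := ∑ i ∈ Finset.range (2*m+1), η ^ i
  set T := ∑ i ∈ Finset.range s, (η ^ (2*m+1)) ^ i with hT
  have e1 : S * (η - 1) = η ^ (2*m+1) - 1 := geom_sum_mul _ _
  have e2 : T * (η ^ (2*m+1) - 1) = η - 1 := by
    rw [hT, geom_sum_mul, ← pow_mul, hs2]
  have e3 : S * T = 1 := by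
    apply mul_right_cancel₀ (sub_ne_zero.mpr hη1)
    linear_combination T * e1 + e2
  have e4 : χ m * χ (-m) = 1 := by
    rw [← AddChar.map_add_eq_mul]; simp
  have hTint : IsIntegral ℤ T := IsIntegral.sum _ fun i _ => ((hint (-1)).pow _).pow _
  have hfin := (htr.mul hTint).mul (hint (-m))
  have e5 : χ m * ((1 - 2*(m:ℂ)) / (2*(m:ℂ)+1)) * S * T * χ (-m) =
      algebraMap ℚ ℂ ((1 - 2*(m:ℚ)) / (2*(m:ℚ)+1)) := by
    push_cast [eq_ratCast]
    linear_combination ((1 - 2*(m:ℂ)) / (2*(m:ℂ)+1)) * (χ m * χ (-m) * e3 + e4)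
  rw [e5, isIntegral_algebraMap_iff (algebraMap ℚ ℂ).injective,
    IsIntegrallyClosed.isIntegral_iff] at hfin
  obtain ⟨k, hk⟩ := hfin
  have hpos : (2*(m:ℚ)+1) ≠ 0 := by positivity
  rw [eq_div_iff hpos] at hk
  have hk' : k * (2*(m:ℤ)+1) = 1 - 2*m := by
    have : ((k : ℚ)) * (2*(m:ℚ)+1) = 1 - 2*m := by simpa using hk
    exact_mod_cast this
  have h2 : (2*(m:ℤ)+1) ∣ 2 := ⟨k+1, by linarith⟩
  have := Int.le_of_dvd (by norm_num) h2
  omega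
end

section
/- Let L = 2m+1 ≥ 3 be an odd integer, let ζ_L = exp(2πi/L), and let Z be the L×L diagonal matrix with (Z)_{ii} = ζ_L^{m−i} for i = 0,…,L−1. Then (A^{F,L})² = I_L, while for every integer k with 1 ≤ k ≤ L−1 one has (Z^k A^{F,L})² ≠ I_L. -/
open Matrix Polynomial

theorem coinF_apply_aux (m : ℕ) (i j : Fin (2*m+1)) :
    coinF m i j = 2 / (2*(m:ℂ)+1) - (if j = Fin.rev i then 1 else 0) := by
  have hL : (2*(m:ℂ)+1) ≠ 0 := by exact_mod_cast Nat.succ_ne_zero (2*m)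
  have hiff : ((i : ℕ) + (j : ℕ) = 2*m) ↔ j = Fin.rev i := by
    rw [Fin.ext_iff, Fin.val_rev]; omega
  unfold coinF
  by_cases h : j = Fin.rev i
  · rw [if_pos (hiff.2 h), if_pos h]; field_simp; ring
  · rw [if_neg (fun h' => h (hiff.1 h')), if_neg h]; ring

theorem coinF_sq_aux (m : ℕ) : coinF m * coinF m = 1 := by
  have hL : (2*(m:ℂ)+1) ≠ 0 := by exact_mod_cast Nat.succ_ne_zero (2*m)
  ext i j
  rw [Matrix.mul_apply]
  simp only [coinF_apply_aux]
  have hr : ∀ x : Fin (2*m+1), (j = Fin.rev x) ↔ (x = Fin.rev j) := fun x =>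
    ⟨fun h => by rw [h, Fin.rev_rev], fun h => by rw [h, Fin.rev_rev]⟩
  simp only [hr, sub_mul, mul_sub, Finset.sum_sub_distrib, mul_ite, ite_mul, mul_one, one_mul,
    mul_zero, zero_mul, Finset.sum_ite_eq', Finset.mem_univ, if_true, Finset.sum_const,
    Finset.card_univ, Fintype.card_fin, nsmul_eq_mul, Fin.rev_inj, Matrix.one_apply, eq_comm (a := j) (b := i)]
  push_cast
  split_ifs <;> field_simp <;> ring

theorem coinF_ne_zero_aux (m : ℕ) (i j : Fin (2*m+1)) : coinF m i j ≠ 0 := by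
  have hL : (2*(m:ℂ)+1) ≠ 0 := by exact_mod_cast Nat.succ_ne_zero (2*m)
  have h1 : (1 - 2*(m:ℂ)) ≠ 0 := by
    intro h
    have h2 : ((1 : ℕ) : ℂ) = ((2*m : ℕ) : ℂ) := by push_cast; exact sub_eq_zero.1 h
    have h3 : 1 = 2*m := Nat.cast_injective h2
    omega
  unfold coinF
  split_ifs
  · exact div_ne_zero h1 hL
  · exact div_ne_zero two_ne_zero hL

/-- For odd `L = 2m+1 ≥ 3`, `(A^{F,L})² = I_L`, while `(Z^k A^{F,L})² ≠ I_L`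
for every `1 ≤ k ≤ L−1`, where `Z = diag(ζ_L^m, …, ζ_L^{−m})`. -/
theorem stmt17 (m : ℕ) (hm : 1 ≤ m) :
    (coinF m) ^ 2 = 1 ∧
    ∀ k : ℕ, 1 ≤ k → k ≤ 2*m → ((Zmat (2*m+1) m) ^ k * coinF m) ^ 2 ≠ 1 := by
  refine ⟨by rw [pow_two, coinF_sq_aux], ?_⟩
  intro k hk1 hk2 h
  have h2 : (Zmat (2*m+1) m) ^ k * coinF m * (Zmat (2*m+1) m) ^ k = coinF m := by
    have h3 := congrArg (· * coinF m) h
    simp only [pow_two, one_mul] at h3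
    rw [← mul_assoc, mul_assoc _ (coinF m) (coinF m), coinF_sq_aux, mul_one] at h3
    exact h3
  have h4 := congrFun (congrFun h2 ⟨m, by omega⟩) ⟨m - 1, by omega⟩
  rw [Zmat, Matrix.diagonal_pow, Matrix.mul_diagonal, Matrix.diagonal_mul] at h4
  have hd : ((m : ℤ) - ((m - 1 : ℕ) : ℤ)) = 1 := by omega
  simp only [Pi.pow_apply, sub_self, zpow_zero, one_pow, one_mul, hd, zpow_one] at h4
  have h5 := mul_left_cancel₀ (coinF_ne_zero_aux m _ _) (h4.trans (mul_one _).symm)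
  have hp : IsPrimitiveRoot (zetaN (2*m+1)) (2*m+1) :=
    Complex.isPrimitiveRoot_exp (2*m+1) (by omega)
  exact hp.pow_ne_one_of_pos_of_lt (by omega) (by omega) h5
end
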